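/- Let C be a 2D elasticity tensor with d'(C) ≠ 0, and set I₂ = Σᵢⱼ (d'(C) i j)², J₂ = Σᵢⱼₖₗ (H(C) i j k l)², and K₃ = Σᵢⱼₖₗ d(C) i j · H(C) i j k l · d(C) k l. Then the distance from C to its orthotropic reconstruction satisfies the exact formula Σᵢⱼₖₗ (H(C) i j k l − (2K₃/I₂²)·(d'(C) i j · d'(C) k l − ½·I₂·J i j k l))² = (J₂·I₂² − 2K₃²)/I₂²; equivalently, the norm of H(C) − (2K₃/I₂²)·d'∗d' equals √(J₂·I₂² − 2K₃²)/I₂. -/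

import Mathlib

open Finset

noncomputable section

/-- A fourth-order tensor on `ℝ²`. -/
abbrev Tens4 := Fin 2 → Fin 2 → Fin 2 → Fin 2 → ℝ

/-- Kronecker delta on `Fin 2`. -/
def kdelta (i j : Fin 2) : ℝ := if i = j then 1 else 0

/-- The isotropic fourth-order tensor `J`. -/
def Jten (i j k l : Fin 2) : ℝ :=
  (kdelta i k * kdelta j l + kdelta i l * kdelta j k) / 2 - kdelta i j * kdelta k l / 2

/-- A 2D elasticity tensor: minor and major index symmetries. -/
def IsElas (C : Tens4) : Prop :=
  (∀ i j k l, C i j k l = C j i k l) ∧ (∀ i j k l, C i j k l = C i j l k) ∧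
    (∀ i j k l, C i j k l = C k l i j)

/-- Dilatation tensor `d(C)ᵢⱼ = Σₖ C k k i j`. -/
def dil (C : Tens4) (i j : Fin 2) : ℝ := ∑ k, C k k i j

/-- Voigt tensor `v(C)ᵢⱼ = Σₖ C k i k j`. -/
def voigt (C : Tens4) (i j : Fin 2) : ℝ := ∑ k, C k i k j

/-- Shear modulus `μ(C)`. -/
def muC (C : Tens4) : ℝ := (2 * ∑ i, voigt C i i - ∑ i, dil C i i) / 8

/-- 2D bulk modulus `κ(C)`. -/
def kappaC (C : Tens4) : ℝ := (∑ i, dil C i i) / 4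

/-- Deviatoric part `d'(C)` of the dilatation tensor. -/
def devC (C : Tens4) (i j : Fin 2) : ℝ := dil C i j - (∑ k, dil C k k) / 2 * kdelta i j

/-- Harmonic (fourth-order) part `H(C)` of the elasticity tensor. -/
def harmC (C : Tens4) (i j k l : Fin 2) : ℝ :=
  C i j k l - 2 * muC C * Jten i j k l - kappaC C * kdelta i j * kdelta k l
    - (kdelta i j * devC C k l + devC C i j * kdelta k l) / 2

/-- A 2D harmonic fourth-order tensor: totally symmetric (invariant under all
permutations of its four indices) and traceless. -/
def IsHarmonic (H : Tens4) : Prop :=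
  (∀ (σ : Equiv.Perm (Fin 4)) (v : Fin 4 → Fin 2),
      H (v (σ 0)) (v (σ 1)) (v (σ 2)) (v (σ 3)) = H (v 0) (v 1) (v 2) (v 3)) ∧
    (∀ i j : Fin 2, ∑ k, H k k i j = 0)

/-- Invariant `I₂ = ‖d'(C)‖²`. -/
def I2 (C : Tens4) : ℝ := ∑ i, ∑ j, (devC C i j) ^ 2

/-- Invariant `J₂ = ‖H(C)‖²`. -/
def J2 (C : Tens4) : ℝ := ∑ i, ∑ j, ∑ k, ∑ l, (harmC C i j k l) ^ 2

/-- Invariant `K₃ = d(C) : H(C) : d(C)`. -/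
def K3 (C : Tens4) : ℝ :=
  ∑ i, ∑ j, ∑ k, ∑ l, dil C i j * harmC C i j k l * dil C k l

/-!
Write `d' = devC C`, `H = harmC C` and `B = d' ∗ d'`. The coefficient `2K₃/I₂²` is
`⟨H, B⟩ / ⟨B, B⟩`, so `H - (2K₃/I₂²) B` is the residual of the orthogonal projection of `H` onto the
line spanned by `B`, and the formula is Pythagoras' identity `‖H‖² - ⟨H, B⟩² / ‖B‖²`. Indeed
`⟨B, B⟩ = I₂²/2` because `d'` is symmetric and traceless, and `⟨H, B⟩ = K₃` because all traces of
the harmonic tensor `H` vanish: `H` is orthogonal to `J`, and contracting it with `d(C)` or with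
`d'` is the same.
-/

theorem kdelta_self (i : Fin 2) : kdelta i i = 1 := if_pos rfl

theorem kdelta_zero_one : kdelta 0 1 = 0 := if_neg zero_ne_one

theorem kdelta_one_zero : kdelta 1 0 = 0 := if_neg one_ne_zero

theorem kdelta_comm (i j : Fin 2) : kdelta i j = kdelta j i := by
  simp only [kdelta, eq_comm]

/-- The Frobenius inner product of fourth-order tensors. -/
def tensInner (A B : Tens4) : ℝ := ∑ i, ∑ j, ∑ k, ∑ l, A i j k l * B i j k l

theorem tensInner_comm (A B : Tens4) : tensInner A B = tensInner B A := by
  simp only [tensInner, mul_comm]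

theorem tensInner_self (A : Tens4) :
    tensInner A A = ∑ i, ∑ j, ∑ k, ∑ l, A i j k l ^ 2 := by
  simp only [tensInner, sq]

theorem tensInner_sub_smul_right (A B D : Tens4) (s : ℝ) :
    tensInner A (B - s • D) = tensInner A B - s * tensInner A D := by
  simp only [tensInner, mul_sum, ← sum_sub_distrib, Pi.sub_apply, Pi.smul_apply, smul_eq_mul,
    mul_sub, mul_left_comm]

theorem tensInner_sub_smul_self (A B : Tens4) (s : ℝ) :
    tensInner (A - s • B) (A - s • B) =
      tensInner A A - 2 * s * tensInner A B + s ^ 2 * tensInner B B := by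
  rw [tensInner_sub_smul_right, tensInner_comm _ A, tensInner_comm _ B, tensInner_sub_smul_right,
    tensInner_sub_smul_right, tensInner_comm B A]
  ring

theorem tensInner_sub_proj_self (A B : Tens4) :
    tensInner (A - (tensInner A B / tensInner B B) • B)
        (A - (tensInner A B / tensInner B B) • B) =
      tensInner A A - tensInner A B ^ 2 / tensInner B B := by
  rw [tensInner_sub_smul_self]
  by_cases hB : tensInner B B = 0
  · simp [hB]
  · field_simp
    ring

theorem tensInner_Jten_right (A : Tens4) :
    tensInner A Jten =
      ((∑ i, ∑ j, A i j i j) + (∑ i, ∑ j, A i j j i)) / 2 - (∑ i, ∑ j, A i i j j) / 2 := by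
  simp only [tensInner, Jten, Fin.sum_univ_two, kdelta_self, kdelta_zero_one, kdelta_one_zero]
  ring

theorem tensInner_Jten_Jten : tensInner Jten Jten = 2 := by
  simp only [tensInner_Jten_right, Jten, Fin.sum_univ_two, kdelta_self, kdelta_zero_one,
    kdelta_one_zero]
  norm_num

section SecondOrder

variable {a : Fin 2 → Fin 2 → ℝ}

/-- The tensor product `a ⊗ b` of second-order tensors. -/
def tensOuter (a b : Fin 2 → Fin 2 → ℝ) : Tens4 := fun i j k l => a i j * b k l

/-- The squared Frobenius norm of a second-order tensor. -/
def sqNorm (a : Fin 2 → Fin 2 → ℝ) : ℝ := ∑ i, ∑ j, a i j ^ 2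

/-- A deviator: a symmetric and traceless second-order tensor. -/
def IsDeviator (a : Fin 2 → Fin 2 → ℝ) : Prop :=
  (∀ i j, a i j = a j i) ∧ ∑ i, a i i = 0

/-- The harmonic square `a ∗ a` of a second-order tensor, given by the formula
`a ⊗ a - (‖a‖² / 2) J`, which is the harmonic part of `a ⊗ a` when `a` is a deviator. -/
def harmonicSquare (a : Fin 2 → Fin 2 → ℝ) : Tens4 := tensOuter a a - (sqNorm a / 2) • Jten

theorem sqNorm_pos (ha : a ≠ 0) : 0 < sqNorm a := by
  obtain ⟨i, hi⟩ := Function.ne_iff.mp ha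
  obtain ⟨j, hij⟩ := Function.ne_iff.mp hi
  exact sum_pos' (fun _ _ => sum_nonneg fun _ _ => sq_nonneg _)
    ⟨i, mem_univ i, sum_pos' (fun _ _ => sq_nonneg _) ⟨j, mem_univ j, sq_pos_of_ne_zero hij⟩⟩

theorem tensInner_tensOuter_self (a : Fin 2 → Fin 2 → ℝ) :
    tensInner (tensOuter a a) (tensOuter a a) = sqNorm a ^ 2 := by
  simp only [tensInner, tensOuter, sqNorm, Fin.sum_univ_two]
  ring

theorem IsDeviator.tensInner_tensOuter_Jten (ha : IsDeviator a) :
    tensInner (tensOuter a a) Jten = sqNorm a := by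
  have htrace : ∑ i, ∑ j, tensOuter a a i i j j = 0 := by
    simp only [tensOuter, ← mul_sum, ha.2, mul_zero, sum_const_zero]
  have hsymm : ∑ i, ∑ j, tensOuter a a i j j i = sqNorm a :=
    sum_congr rfl fun i _ => sum_congr rfl fun j _ => by rw [tensOuter, ha.1 j i, sq]
  have hsq : ∑ i, ∑ j, tensOuter a a i j i j = sqNorm a := by
    simp only [tensOuter, sqNorm, sq]
  rw [tensInner_Jten_right, htrace, hsymm, hsq]
  ring

theorem IsDeviator.tensInner_harmonicSquare_self (ha : IsDeviator a) :
    tensInner (harmonicSquare a) (harmonicSquare a) = sqNorm a ^ 2 / 2 := by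
  rw [harmonicSquare, tensInner_sub_smul_self, tensInner_tensOuter_self,
    ha.tensInner_tensOuter_Jten, tensInner_Jten_Jten]
  ring

end SecondOrder

theorem apply_comp_perm_of_apply_comp_swap {n : ℕ} {α β : Type*} {f : (Fin (n + 1) → α) → β}
    (hf : ∀ (i : Fin n) (v : Fin (n + 1) → α), f (v ∘ Equiv.swap i.castSucc i.succ) = f v)
    (σ : Equiv.Perm (Fin (n + 1))) (v : Fin (n + 1) → α) : f (v ∘ σ) = f v := by
  have hσ : σ ∈ Submonoid.closure
      (Set.range fun i : Fin n => Equiv.swap i.castSucc i.succ) := by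
    simp [Equiv.Perm.mclosure_swap_castSucc_succ]
  induction hσ using Submonoid.closure_induction generalizing v with
  | mem τ hτ =>
    obtain ⟨i, rfl⟩ := hτ
    exact hf i v
  | one => rfl
  | mul τ ρ _ _ hτ hρ =>
    rw [Equiv.Perm.coe_mul, ← Function.comp_assoc, hρ, hτ]

namespace IsElas

variable {T : Tens4}

theorem isHarmonic_of_swap_middle (hT : IsElas T) (hmid : ∀ i j k l, T i j k l = T i k j l)
    (hdil : dil T = 0) : IsHarmonic T := by
  refine ⟨apply_comp_perm_of_apply_comp_swap (f := fun v => T (v 0) (v 1) (v 2) (v 3)) ?_,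
    fun i j => congrFun₂ hdil i j⟩
  intro i v
  fin_cases i
  · exact (hT.1 ..).symm
  · exact (hmid ..).symm
  · exact (hT.2.1 ..).symm

/-- The elastic symmetries leave only `T₀₀₁₁ = T₀₁₀₁` to be checked, and the two traces differ by
`2 (T₀₀₁₁ - T₀₁₀₁)`. -/
theorem swap_middle_of_sum_dil_eq_sum_voigt (hT : IsElas T)
    (htrace : ∑ i, dil T i i = ∑ i, voigt T i i) (i j k l : Fin 2) : T i j k l = T i k j l := by
  obtain ⟨hleft, hright, hmajor⟩ := hT
  have hcross : T 0 0 1 1 = T 0 1 0 1 := by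
    simp only [dil, voigt, Fin.sum_univ_two] at htrace
    linarith [hmajor 0 0 1 1, hleft 0 1 0 1, hright 1 0 0 1]
  have hmid : ∀ p q, T p 0 1 q = T p 1 0 q := by
    intro p q
    fin_cases p <;> fin_cases q
    · exact (hmajor 0 0 1 0).trans (hleft 1 0 0 0)
    · exact hcross
    · exact (hleft 1 0 1 0).trans <| (hright 0 1 1 0).trans <| hcross.symm.trans (hmajor 0 0 1 1)
    · exact (hmajor 1 0 1 1).trans (hright 1 1 1 0)
  fin_cases j <;> fin_cases k
  · rfl
  · exact hmid i l
  · exact (hmid i l).symm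
  · rfl

theorem isHarmonic (hT : IsElas T) (hdil : dil T = 0) (hvoigt : ∑ i, voigt T i i = 0) :
    IsHarmonic T :=
  hT.isHarmonic_of_swap_middle
    (hT.swap_middle_of_sum_dil_eq_sum_voigt (by simp [hdil, hvoigt])) hdil

end IsElas

namespace IsHarmonic

variable {H : Tens4}

theorem swap_middle (hH : IsHarmonic H) (i j k l : Fin 2) : H i j k l = H i k j l :=
  (hH.1 (Equiv.swap 1 2) ![i, j, k, l]).symm

theorem swap_right (hH : IsHarmonic H) (i j k l : Fin 2) : H i j k l = H i j l k :=
  (hH.1 (Equiv.swap 2 3) ![i, j, k, l]).symm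

theorem reverse (hH : IsHarmonic H) (i j k l : Fin 2) : H i j k l = H l k j i :=
  (hH.1 Fin.revPerm ![i, j, k, l]).symm

theorem sum_right (hH : IsHarmonic H) (i j : Fin 2) : ∑ k, H i j k k = 0 := by
  simpa only [hH.reverse i j] using hH.2 j i

theorem tensInner_Jten (hH : IsHarmonic H) : tensInner H Jten = 0 := by
  have htrace : ∑ i, ∑ j, H i i j j = 0 := by
    rw [sum_comm]
    exact sum_eq_zero fun j _ => hH.2 j j
  have hvoigt : ∑ i, ∑ j, H i j i j = 0 := by simpa only [hH.swap_middle _ _ _ _] using htrace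
  have hvoigt' : ∑ i, ∑ j, H i j j i = 0 := by simpa only [hH.swap_right _ _ _ _] using hvoigt
  rw [tensInner_Jten_right, hvoigt, hvoigt', htrace]
  norm_num

theorem tensInner_tensOuter_kdelta_left (hH : IsHarmonic H) (a : Fin 2 → Fin 2 → ℝ) :
    tensInner H (tensOuter kdelta a) = 0 := by
  have hcontract : tensInner H (tensOuter kdelta a) = ∑ k, ∑ l, (∑ i, H i i k l) * a k l := by
    simp only [tensInner, tensOuter, Fin.sum_univ_two, kdelta_self, kdelta_zero_one,
      kdelta_one_zero]
    ring
  simp [hcontract, hH.2]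

theorem tensInner_tensOuter_kdelta_right (hH : IsHarmonic H) (a : Fin 2 → Fin 2 → ℝ) :
    tensInner H (tensOuter a kdelta) = 0 := by
  have hcontract : tensInner H (tensOuter a kdelta) = ∑ i, ∑ j, (∑ k, H i j k k) * a i j := by
    simp only [tensInner, tensOuter, Fin.sum_univ_two, kdelta_self, kdelta_zero_one,
      kdelta_one_zero]
    ring
  simp [hcontract, hH.sum_right]

theorem tensInner_tensOuter_sub_smul_kdelta (hH : IsHarmonic H) (a : Fin 2 → Fin 2 → ℝ) (t : ℝ) :
    tensInner H (tensOuter (a - t • kdelta) (a - t • kdelta)) = tensInner H (tensOuter a a) := by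
  have hsplit : tensOuter (a - t • kdelta) (a - t • kdelta) =
      tensOuter a a - t • tensOuter a kdelta - t • tensOuter kdelta (a - t • kdelta) := by
    ext i j k l
    simp only [tensOuter, Pi.sub_apply, Pi.smul_apply, smul_eq_mul]
    ring
  rw [hsplit, tensInner_sub_smul_right, tensInner_sub_smul_right,
    hH.tensInner_tensOuter_kdelta_left, hH.tensInner_tensOuter_kdelta_right]
  ring

theorem tensInner_harmonicSquare (hH : IsHarmonic H) (a : Fin 2 → Fin 2 → ℝ) :
    tensInner H (harmonicSquare a) = tensInner H (tensOuter a a) := by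
  rw [harmonicSquare, tensInner_sub_smul_right, hH.tensInner_Jten, mul_zero, sub_zero]

end IsHarmonic

theorem sum_devC_eq_zero (C : Tens4) : ∑ i, devC C i i = 0 := by
  simp only [devC, Fin.sum_univ_two, kdelta_self]
  ring

theorem devC_eq_dil_sub_smul_kdelta (C : Tens4) :
    devC C = dil C - ((∑ k, dil C k k) / 2) • kdelta := rfl

namespace IsElas

variable {C : Tens4}

theorem devC_comm (hC : IsElas C) (i j : Fin 2) : devC C i j = devC C j i := by
  simp only [devC, dil, hC.2.1 _ _ i j, kdelta_comm i j]

theorem isDeviator_devC (hC : IsElas C) : IsDeviator (devC C) :=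
  ⟨hC.devC_comm, sum_devC_eq_zero C⟩

theorem isElas_harmC (hC : IsElas C) : IsElas (harmC C) := by
  refine ⟨fun i j k l => ?_, fun i j k l => ?_, fun i j k l => ?_⟩ <;> simp only [harmC, Jten]
  · rw [hC.1 i j k l, hC.devC_comm i j, kdelta_comm i j]
    ring
  · rw [hC.2.1 i j k l, hC.devC_comm k l, kdelta_comm k l]
    ring
  · rw [hC.2.2 i j k l, kdelta_comm i k, kdelta_comm j l, kdelta_comm i l, kdelta_comm j k]
    ring

end IsElas

theorem dil_harmC (C : Tens4) : dil (harmC C) = 0 := by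
  have hcontract : ∀ i j, dil (harmC C) i j =
      dil C i j - 2 * kappaC C * kdelta i j - devC C i j - (∑ k, devC C k k) / 2 * kdelta i j := by
    simp only [Fin.forall_fin_two, dil, harmC, Jten, Fin.sum_univ_two, kdelta_self,
      kdelta_zero_one, kdelta_one_zero]
    refine ⟨⟨?_, ?_⟩, ?_, ?_⟩ <;> ring
  ext i j
  rw [hcontract, sum_devC_eq_zero, devC, kappaC, Pi.zero_apply, Pi.zero_apply]
  ring

theorem sum_voigt_harmC (C : Tens4) : ∑ i, voigt (harmC C) i i = 0 := by
  have hcontract : ∑ i, voigt (harmC C) i i =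
      ∑ i, voigt C i i - 4 * muC C - 2 * kappaC C - ∑ i, devC C i i := by
    simp only [voigt, harmC, Jten, Fin.sum_univ_two, kdelta_self, kdelta_zero_one, kdelta_one_zero]
    ring
  rw [hcontract, sum_devC_eq_zero, muC, kappaC]
  ring

namespace IsElas

variable {C : Tens4}

theorem isHarmonic_harmC (hC : IsElas C) : IsHarmonic (harmC C) :=
  hC.isElas_harmC.isHarmonic (dil_harmC C) (sum_voigt_harmC C)

theorem tensInner_harmC_harmonicSquare_devC (hC : IsElas C) :
    tensInner (harmC C) (harmonicSquare (devC C)) = K3 C := by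
  rw [hC.isHarmonic_harmC.tensInner_harmonicSquare, devC_eq_dil_sub_smul_kdelta,
    hC.isHarmonic_harmC.tensInner_tensOuter_sub_smul_kdelta]
  simp only [tensInner, tensOuter, K3, mul_left_comm, mul_assoc]

end IsElas

/-- Exact formula for the squared distance from `C` to its
orthotropic reconstruction:
`‖H(C) − (2K₃/I₂²) d'∗d'‖² = (J₂ I₂² − 2K₃²)/I₂²`, and the corresponding norm
equals `√(J₂ I₂² − 2K₃²)/I₂`. -/
theorem distance_to_orthotropic_reconstruction_formula (C : Tens4) (hC : IsElas C)
    (hd : devC C ≠ 0) :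
    (∑ i, ∑ j, ∑ k, ∑ l,
        (harmC C i j k l - 2 * K3 C / (I2 C) ^ 2
          * (devC C i j * devC C k l - I2 C / 2 * Jten i j k l)) ^ 2)
      = (J2 C * (I2 C) ^ 2 - 2 * (K3 C) ^ 2) / (I2 C) ^ 2 ∧
    Real.sqrt (∑ i, ∑ j, ∑ k, ∑ l,
        (harmC C i j k l - 2 * K3 C / (I2 C) ^ 2
          * (devC C i j * devC C k l - I2 C / 2 * Jten i j k l)) ^ 2)
      = Real.sqrt (J2 C * (I2 C) ^ 2 - 2 * (K3 C) ^ 2) / I2 C := by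
  have hI : 0 < I2 C := sqNorm_pos hd
  have hBB : tensInner (harmonicSquare (devC C)) (harmonicSquare (devC C)) = I2 C ^ 2 / 2 :=
    hC.isDeviator_devC.tensInner_harmonicSquare_self
  have hcoeff : 2 * K3 C / I2 C ^ 2 = K3 C / (I2 C ^ 2 / 2) := by field_simp
  have hdist := tensInner_sub_proj_self (harmC C) (harmonicSquare (devC C))
  rw [hC.tensInner_harmC_harmonicSquare_devC, hBB, ← hcoeff, tensInner_self, tensInner_self]
    at hdist
  have hdist_sq : (∑ i, ∑ j, ∑ k, ∑ l,
      (harmC C i j k l - 2 * K3 C / (I2 C) ^ 2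
        * (devC C i j * devC C k l - I2 C / 2 * Jten i j k l)) ^ 2)
      = (J2 C * (I2 C) ^ 2 - 2 * (K3 C) ^ 2) / (I2 C) ^ 2 := by
    refine hdist.trans ?_
    rw [← J2]
    field_simp
  refine ⟨hdist_sq, ?_⟩
  rw [hdist_sq, Real.sqrt_div' _ (sq_nonneg _), Real.sqrt_sq hI.le]
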